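/- Let 0 < c < 1 and k ∈ ℕ, and define Φ_k^{(1)}(η) = (1/2) ∫_{-∞}^∞ e^{η(c+it)} (c+it)^k / sin(π(c+it)) dt for η ∈ ℝ. Then Φ_k^{(1)} is differentiable on ℝ and (d/dη) Φ_k^{(1)}(η) = Φ_{k+1}^{(1)}(η) for every η ∈ ℝ. -/

import Mathlib

open Real MeasureTheory Complex

/-- The auxiliary function `Φ_k^{(1)}(η)`. -/
noncomputable def Phi1 (c : ℝ) (k : ℕ) (η : ℝ) : ℂ :=
  (1 / 2 : ℂ) * ∫ t : ℝ, Complex.exp ((η : ℂ) * ((c : ℂ) + t * Complex.I)) *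
      ((c : ℂ) + t * Complex.I) ^ k / Complex.sin ((π : ℂ) * ((c : ℂ) + t * Complex.I))

/-! On the line `re z = c` the factor `exp (η z)` has constant modulus `exp (η c)`, locally bounded
in `η`, while `|sin (π z)| ≥ |sin (π c)| cosh (π im z)` outgrows every power of `z`. Hence
`z ^ k / sin (π z)` is integrable along the line for every `k`, and one may differentiate under the
integral sign; each derivative brings down one factor `z`. -/

section DerivUnderIntegral

variable {α E : Type*} [MeasurableSpace α] {μ : Measure α} [NormedAddCommGroup E] [NormedSpace ℂ E]

theorem norm_cexp_ofReal_mul_le {C : ℝ} {z : ℂ} (hz : |z.re| ≤ C) (η : ℝ) :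
    ‖cexp (η * z)‖ ≤ Real.exp (|η| * C) := by
  rw [Complex.norm_exp, re_ofReal_mul]
  refine Real.exp_le_exp.2 ?_
  calc η * z.re ≤ |η * z.re| := le_abs_self _
    _ = |η| * |z.re| := abs_mul _ _
    _ ≤ |η| * C := by gcongr

theorem hasDerivAt_cexp_ofReal_mul_smul (z : ℂ) (v : E) (η : ℝ) :
    HasDerivAt (fun η : ℝ ↦ cexp (η * z) • v) (cexp (η * z) • z • v) η := by
  have h_exp : HasDerivAt (fun η : ℝ ↦ cexp (η * z)) (cexp (η * z) * z) η := by
    simpa using ((hasDerivAt_id η).ofReal_comp.mul_const z).cexp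
  simpa only [mul_smul] using h_exp.smul_const v

theorem hasDerivAt_integral_cexp_ofReal_mul_smul {z : α → ℂ} {g : α → E} {C : ℝ}
    (hz : AEStronglyMeasurable z μ) (hz_re : ∀ᵐ a ∂μ, |(z a).re| ≤ C)
    (hg : Integrable g μ) (hzg : Integrable (fun a ↦ z a • g a) μ) (η : ℝ) :
    HasDerivAt (fun η : ℝ ↦ ∫ a, cexp (η * z a) • g a ∂μ)
      (∫ a, cexp (η * z a) • z a • g a ∂μ) η := by
  have h_exp (x : ℝ) : AEStronglyMeasurable (fun a ↦ cexp (x * z a)) μ :=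
    continuous_exp.comp_aestronglyMeasurable (hz.const_mul (x : ℂ))
  have h_int : Integrable (fun a ↦ cexp (η * z a) • g a) μ :=
    hg.bdd_smul _ (h_exp η) (hz_re.mono fun a ha ↦ norm_cexp_ofReal_mul_le ha η)
  have h_bound : ∀ᵐ a ∂μ, ∀ x ∈ Metric.ball η 1,
      ‖cexp (x * z a) • z a • g a‖ ≤ Real.exp ((|η| + 1) * C) * ‖z a • g a‖ := by
    filter_upwards [hz_re] with a ha x hx
    have hx_abs : |x| ≤ |η| + 1 := by
      have hx_dist : |x - η| < 1 := hx
      linarith [abs_sub_abs_le_abs_sub x η]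
    have hC : 0 ≤ C := (abs_nonneg _).trans ha
    rw [norm_smul]
    gcongr
    exact (norm_cexp_ofReal_mul_le ha x).trans (by gcongr)
  exact (hasDerivAt_integral_of_dominated_loc_of_deriv_le (Metric.ball_mem_nhds η one_pos)
    (.of_forall fun x ↦ (h_exp x).smul hg.1) h_int ((h_exp η).smul hzg.1) h_bound
    (hzg.norm.const_mul _)
    (.of_forall fun a x _ ↦ hasDerivAt_cexp_ofReal_mul_smul (z a) (g a) x)).2

end DerivUnderIntegral

theorem exp_abs_div_two_le_cosh (x : ℝ) : Real.exp |x| / 2 ≤ Real.cosh x := by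
  rw [Real.cosh_eq]
  gcongr
  exact Real.exp_abs_le x

theorem abs_sin_re_mul_cosh_im_le_norm_sin (z : ℂ) :
    |Real.sin z.re| * Real.cosh z.im ≤ ‖Complex.sin z‖ := by
  have h_re : (Complex.sin z).re = Real.sin z.re * Real.cosh z.im := by
    rw [Complex.sin_eq, ← ofReal_sin, ← ofReal_cosh, ← ofReal_cos, ← ofReal_sinh]
    simp [-ofReal_sin, -ofReal_cosh, -ofReal_cos, -ofReal_sinh]
  calc |Real.sin z.re| * Real.cosh z.im = |(Complex.sin z).re| := by
        rw [h_re, abs_mul, abs_of_pos (Real.cosh_pos _)]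
    _ ≤ ‖Complex.sin z‖ := abs_re_le_norm _

theorem norm_pow_le_factorial_mul_exp (z : ℂ) (k : ℕ) :
    ‖z ^ k‖ ≤ k.factorial * Real.exp (|z.re| + |z.im|) := by
  rw [norm_pow]
  calc ‖z‖ ^ k ≤ k.factorial * Real.exp ‖z‖ := by
        rw [← div_le_iff₀' (by positivity)]
        exact Real.pow_div_factorial_le_exp _ (norm_nonneg z) k
    _ ≤ k.factorial * Real.exp (|z.re| + |z.im|) := by
        gcongr
        exact norm_le_abs_re_add_abs_im z

theorem norm_pow_div_sin_pi_mul_le {z : ℂ} (hz : Real.sin (π * z.re) ≠ 0) (k : ℕ) :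
    ‖z ^ k / Complex.sin (π * z)‖ ≤
      2 * k.factorial * Real.exp |z.re| / |Real.sin (π * z.re)| * Real.exp (-|z.im|) := by
  have : 0 < |Real.sin (π * z.re)| := abs_pos.2 hz
  have h_exp : Real.exp (2 * |z.im|) / 2 ≤ Real.cosh (π * z.im) := by
    refine le_trans ?_ (exp_abs_div_two_le_cosh (π * z.im))
    rw [abs_mul, abs_of_pos Real.pi_pos]
    gcongr
    exact Real.two_le_pi
  have h_sin : |Real.sin (π * z.re)| * (Real.exp (2 * |z.im|) / 2) ≤ ‖Complex.sin (π * z)‖ := by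
    calc |Real.sin (π * z.re)| * (Real.exp (2 * |z.im|) / 2)
        ≤ |Real.sin (π * z.re)| * Real.cosh (π * z.im) := by gcongr
      _ ≤ ‖Complex.sin (π * z)‖ := by
        simpa only [re_ofReal_mul, im_ofReal_mul] using abs_sin_re_mul_cosh_im_le_norm_sin (π * z)
  rw [norm_div]
  calc ‖z ^ k‖ / ‖Complex.sin (π * z)‖
      ≤ k.factorial * Real.exp (|z.re| + |z.im|) /
          (|Real.sin (π * z.re)| * (Real.exp (2 * |z.im|) / 2)) :=
        div_le_div₀ (by positivity) (norm_pow_le_factorial_mul_exp z k) (by positivity) h_sin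
    _ = 2 * k.factorial * Real.exp |z.re| / |Real.sin (π * z.re)| * Real.exp (-|z.im|) := by
        rw [two_mul |z.im|, Real.exp_add, Real.exp_add, Real.exp_neg]
        field_simp

theorem integrable_exp_neg_abs : Integrable fun t : ℝ ↦ Real.exp (-|t|) := by
  rw [← integrableOn_univ, ← Set.Iic_union_Ioi (a := (0 : ℝ))]
  refine .union ?_ ?_
  · refine (integrableOn_exp_Iic 0).congr_fun (fun t ht ↦ ?_) measurableSet_Iic
    simp only [abs_of_nonpos (Set.mem_Iic.1 ht), neg_neg]
  · refine (integrableOn_exp_neg_Ioi 0).congr_fun (fun t ht ↦ ?_) measurableSet_Ioi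
    simp only [abs_of_pos (Set.mem_Ioi.1 ht)]

theorem integrable_pow_div_sin_pi_mul_vertical {c : ℝ} (hc : ∀ n : ℤ, c ≠ n) (k : ℕ) :
    Integrable fun t : ℝ ↦ (c + t * I : ℂ) ^ k / Complex.sin (π * (c + t * I)) := by
  have h_sin : Real.sin (π * c) ≠ 0 := by
    refine Real.sin_ne_zero_iff.2 fun n hn ↦ hc n ?_
    rw [mul_comm] at hn
    exact (mul_left_cancel₀ Real.pi_ne_zero hn).symm
  have h_meas : Measurable fun t : ℝ ↦ (c + t * I : ℂ) ^ k / Complex.sin (π * (c + t * I)) := by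
    fun_prop
  refine (integrable_exp_neg_abs.const_mul
    (2 * k.factorial * Real.exp |c| / |Real.sin (π * c)|)).mono' h_meas.aestronglyMeasurable
    (.of_forall fun t ↦ ?_)
  simpa using norm_pow_div_sin_pi_mul_le (z := c + t * I) (by simpa using h_sin) k

theorem stmt16_general (c : ℝ) (hc : ∀ n : ℤ, c ≠ n) (k : ℕ) (η : ℝ) :
    HasDerivAt (fun η : ℝ => Phi1 c k η) (Phi1 c (k + 1) η) η := by
  have h_succ (t : ℝ) : (c + t * I : ℂ) • ((c + t * I : ℂ) ^ k / Complex.sin (π * (c + t * I))) =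
      (c + t * I : ℂ) ^ (k + 1) / Complex.sin (π * (c + t * I)) := by
    rw [smul_eq_mul, pow_succ', mul_div_assoc]
  have h_deriv := hasDerivAt_integral_cexp_ofReal_mul_smul
    (z := fun t : ℝ ↦ c + t * I) (C := |c|) (by fun_prop) (.of_forall fun t ↦ by simp)
    (integrable_pow_div_sin_pi_mul_vertical hc k)
    (by simpa only [h_succ] using integrable_pow_div_sin_pi_mul_vertical hc (k + 1)) η
  simp only [h_succ, smul_eq_mul, ← mul_div_assoc] at h_deriv
  exact h_deriv.const_mul (1 / 2)

theorem stmt16 (c : ℝ) (hc0 : 0 < c) (hc1 : c < 1) (k : ℕ) (η : ℝ) :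
    HasDerivAt (fun η : ℝ => Phi1 c k η) (Phi1 c (k + 1) η) η := by
  refine stmt16_general c (fun n hn ↦ ?_) k η
  subst hn
  norm_cast at hc0 hc1
  omega
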